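/- In K(3) the identity 9·z(3,{1,2,3}) = z(2,{1,2})·z(2,{3}) − z(2,{1,3})·z(2,{2}) + z(2,{2,3})·z(2,{1}) + z(1,{1,2})·z(3,{3}) − z(1,{1,3})·z(3,{2}) + z(1,{2,3})·z(3,{1}) holds. -/

import Mathlib

/-!
The relations defining `A` give `x + y + w = 0` and `x² + xy + y² = 0`, the latter because
`x² + y² + w² = 2(x² + xy + y²)` once `w = -x - y` and `2` is invertible. (The degree-six relation
plays no role.) The degree-one generators `α_j, β_j, γ_j` anticommute, and `γ_j = -α_j - β_j`.
Moving generators into increasing order of `j` absorbs the signs of the right-hand side, so with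
`(x₀, x₁, x₂) = (x, y, w)` and `(e₀, e₁, e₂) = (α, β, γ)` it becomes
`∑_{i,k} (x_i x_k + x_k²)` times the three words of shape `iik`, `iki`, `kii`. Eliminating `γ` and
`w` expresses both sides in the eight words in `α, β`. The coefficients of `ααα` and `βββ` agree as
polynomials in `x, y`, while at each of the six mixed words the two sides differ by
`3(x² + xy + y²)`, which vanishes. This is `nine_identity_of_anticomm`, valid in any algebra over
a commutative ring; it is applied to `K(3)` as an algebra over `A`.
-/

set_option synthInstance.maxHeartbeats 1000000
set_option maxHeartbeats 1000000

open MvPolynomial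
open scoped TensorProduct

noncomputable section

abbrev P3 : Type := MvPolynomial (Fin 3) ℚ

def Jid : Ideal P3 :=
  Ideal.span {X 0 + X 1 + X 2, X 0 ^ 2 + X 1 ^ 2 + X 2 ^ 2, X 0 ^ 6 + X 1 ^ 6 + X 2 ^ 6}

abbrev Aq : Type := P3 ⧸ Jid

def mkA : P3 →ₐ[ℚ] Aq := Ideal.Quotient.mkₐ ℚ Jid

lemma rename_sum_pow (σ : Equiv.Perm (Fin 3)) (k : ℕ) :
    rename σ ((X 0 : P3) ^ k + X 1 ^ k + X 2 ^ k) = (X 0 : P3) ^ k + X 1 ^ k + X 2 ^ k := by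
  have h : ((X 0 : P3) ^ k + X 1 ^ k + X 2 ^ k) = ∑ i, (X i : P3) ^ k := by
    simp [Fin.sum_univ_three]
  rw [h, map_sum]
  simp only [map_pow, rename_X]
  exact Fintype.sum_equiv σ _ _ fun i => rfl

lemma rename_mem_J (σ : Equiv.Perm (Fin 3)) {p : P3} (hp : p ∈ Jid) :
    rename σ p ∈ Jid := by
  have hle : Jid.map (rename σ : P3 →ₐ[ℚ] P3).toRingHom ≤ Jid := by
    rw [Jid, Ideal.map_span, Ideal.span_le]
    rintro q ⟨r, hr, rfl⟩
    simp only [Set.mem_insert_iff, Set.mem_singleton_iff] at hr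
    have h1 := rename_sum_pow σ 1
    simp only [pow_one] at h1
    rcases hr with rfl | rfl | rfl
    · exact Ideal.subset_span (by simp only [AlgHom.toRingHom_eq_coe, RingHom.coe_coe, h1]; left; rfl)
    · exact Ideal.subset_span (by
        simp only [AlgHom.toRingHom_eq_coe, RingHom.coe_coe, rename_sum_pow σ 2]
        right; left; rfl)
    · exact Ideal.subset_span (by
        simp only [AlgHom.toRingHom_eq_coe, RingHom.coe_coe, rename_sum_pow σ 6]
        right; right; rfl)
  exact hle (Ideal.mem_map_of_mem _ hp)

def permAq (σ : Equiv.Perm (Fin 3)) : Aq →ₐ[ℚ] Aq :=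
  Ideal.Quotient.liftₐ Jid (mkA.comp (rename σ)) (fun p hp => by
    simp only [AlgHom.comp_apply, mkA, Ideal.Quotient.mkₐ_eq_mk]
    exact Ideal.Quotient.eq_zero_iff_mem.mpr (rename_mem_J σ hp))

def negP : P3 →ₐ[ℚ] P3 := aeval (fun i => -X i)

lemma negP_mem_J {p : P3} (hp : p ∈ Jid) : negP p ∈ Jid := by
  have hle : Jid.map negP.toRingHom ≤ Jid := by
    rw [Jid, Ideal.map_span, Ideal.span_le]
    rintro q ⟨r, hr, rfl⟩
    simp only [Set.mem_insert_iff, Set.mem_singleton_iff] at hr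
    rcases hr with rfl | rfl | rfl
    · have : negP ((X 0 : P3) + X 1 + X 2) = -(X 0 + X 1 + X 2) := by
        simp [negP]; try ring
      simp only [AlgHom.toRingHom_eq_coe, RingHom.coe_coe, this]
      exact neg_mem (Ideal.subset_span (by left; rfl))
    · have : negP ((X 0 : P3) ^ 2 + X 1 ^ 2 + X 2 ^ 2) = X 0 ^ 2 + X 1 ^ 2 + X 2 ^ 2 := by
        simp [negP]; try ring
      simp only [AlgHom.toRingHom_eq_coe, RingHom.coe_coe, this]
      exact Ideal.subset_span (by right; left; rfl)
    · have : negP ((X 0 : P3) ^ 6 + X 1 ^ 6 + X 2 ^ 6) = X 0 ^ 6 + X 1 ^ 6 + X 2 ^ 6 := by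
        simp [negP]; try ring
      simp only [AlgHom.toRingHom_eq_coe, RingHom.coe_coe, this]
      exact Ideal.subset_span (by right; right; rfl)
  exact hle (Ideal.mem_map_of_mem _ hp)

def negAq : Aq →ₐ[ℚ] Aq :=
  Ideal.Quotient.liftₐ Jid (mkA.comp negP) (fun p hp => by
    simp only [AlgHom.comp_apply, mkA, Ideal.Quotient.mkₐ_eq_mk]
    exact Ideal.Quotient.eq_zero_iff_mem.mpr (negP_mem_J hp))

def Vsub : Submodule ℚ (Fin 3 → ℚ) := Submodule.span ℚ {fun _ => (1 : ℚ)}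

abbrev Vq : Type := (Fin 3 → ℚ) ⧸ Vsub

def vGen (i : Fin 3) : Vq := Submodule.Quotient.mk (Pi.single i 1)

abbrev Em (m : ℕ) : Type := ExteriorAlgebra ℚ (Fin m → Vq)

def eGen (m : ℕ) (j : Fin m) (i : Fin 3) : Em m :=
  ExteriorAlgebra.ι ℚ (Pi.single j (vGen i))

def prodGen (m : ℕ) (i : Fin 3) (I : Finset (Fin m)) : Em m :=
  ((I.sort (· ≤ ·)).map (fun j => eGen m j i)).prod

def extHom {m : ℕ} (g : (Fin m → Vq) →ₗ[ℚ] (Fin m → Vq)) : Em m →ₐ[ℚ] Em m :=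
  ExteriorAlgebra.lift ℚ ⟨(ExteriorAlgebra.ι ℚ).comp g, fun v => by
    simpa using ExteriorAlgebra.ι_sq_zero (g v)⟩

def permV (σ : Equiv.Perm (Fin 3)) : Vq →ₗ[ℚ] Vq :=
  Submodule.mapQ Vsub Vsub (LinearMap.funLeft ℚ ℚ ⇑σ⁻¹) (by
    rw [Vsub, Submodule.span_le]
    rintro v rfl
    exact Submodule.mem_comap.mpr (Submodule.subset_span rfl))

abbrev Kk (m : ℕ) : Type := Aq ⊗[ℚ] Em m

def zz (m : ℕ) (d : ℕ) (I : Finset (Fin m)) : Kk m :=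
  mkA (X 0 ^ d) ⊗ₜ[ℚ] prodGen m 0 I + mkA (X 1 ^ d) ⊗ₜ[ℚ] prodGen m 1 I +
    mkA (X 2 ^ d) ⊗ₜ[ℚ] prodGen m 2 I

def zS (m : ℕ) (i : ℕ) (I : Finset (Fin m)) : Kk m := zz m (i - 1) I
/-- The identity for anticommuting families `a`, `b` and `c = -a - b` in an arbitrary algebra. -/
lemma nine_identity_of_anticomm {R K : Type*} [CommRing R] [Ring K] [Algebra R K] (x y w : R)
    (h1 : x + y + w = 0) (h2 : x ^ 2 + x * y + y ^ 2 = 0) (a b c : Fin 3 → K)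
    (habc : ∀ j, a j + b j + c j = 0)
    (aa : ∀ i j, a j * a i = -(a i * a j))
    (ab : ∀ i j, b j * a i = -(a i * b j))
    (bb : ∀ i j, b j * b i = -(b i * b j)) :
    9 * (x ^ 2 • (a 0 * a 1 * a 2) + y ^ 2 • (b 0 * b 1 * b 2) + w ^ 2 • (c 0 * c 1 * c 2)) =
      (x • (a 0 * a 1) + y • (b 0 * b 1) + w • (c 0 * c 1)) * (x • a 2 + y • b 2 + w • c 2)
      - (x • (a 0 * a 2) + y • (b 0 * b 2) + w • (c 0 * c 2)) * (x • a 1 + y • b 1 + w • c 1)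
      + (x • (a 1 * a 2) + y • (b 1 * b 2) + w • (c 1 * c 2)) * (x • a 0 + y • b 0 + w • c 0)
      + (a 0 * a 1 + b 0 * b 1 + c 0 * c 1) * (x ^ 2 • a 2 + y ^ 2 • b 2 + w ^ 2 • c 2)
      - (a 0 * a 2 + b 0 * b 2 + c 0 * c 2) * (x ^ 2 • a 1 + y ^ 2 • b 1 + w ^ 2 • c 1)
      + (a 1 * a 2 + b 1 * b 2 + c 1 * c 2) * (x ^ 2 • a 0 + y ^ 2 • b 0 + w ^ 2 • c 0) := by
  obtain rfl : c = fun j => -a j - b j := by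
    funext j
    rw [← sub_eq_zero, ← habc j]
    abel
  obtain rfl : w = -x - y := by linear_combination h1
  have ba : ∀ i j, a j * b i = -(b i * a j) := fun i j => by rw [ab, neg_neg]
  have L : ∀ {p q : K} (_ : p * q = -(q * p)) (r : K), p * (q * r) = -(q * (p * r)) := by
    intro p q h r
    rw [← mul_assoc, h, neg_mul, mul_assoc]
  have h9 : (9 : K) = algebraMap R K 9 := by simp only [map_ofNat]
  rw [h9, ← Algebra.smul_def]
  -- Sort every word so that the indices increase; `L` handles the two leading letters.
  simp only [mul_add, add_mul, mul_sub, sub_mul, smul_mul_assoc, mul_smul_comm, mul_neg, neg_mul,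
    mul_assoc, L (aa 0 1), L (ab 0 1), L (ba 0 1), L (bb 0 1), aa 1 2, aa 0 2, ab 1 2, ab 0 2,
    bb 1 2, bb 0 2, ba 1 2, ba 0 2]
  -- One goal for each word: `ααα` and `βββ` hold identically, the others modulo `h2`.
  match_scalars
  all_goals first | ring1 | linear_combination (-3) * h2

lemma mkA_sum : mkA (X 0) + mkA (X 1) + mkA (X 2) = 0 := by
  rw [← map_add, ← map_add]
  exact Ideal.Quotient.eq_zero_iff_mem.mpr (Ideal.subset_span (by left; rfl))

lemma mkA_quadratic :
    mkA (X 0) ^ 2 + mkA (X 0) * mkA (X 1) + mkA (X 1) ^ 2 = 0 := by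
  have h2 : mkA (X 0) ^ 2 + mkA (X 1) ^ 2 + mkA (X 2) ^ 2 = 0 := by
    simp only [← map_pow, ← map_add]
    exact Ideal.Quotient.eq_zero_iff_mem.mpr (Ideal.subset_span (by right; left; rfl))
  have h : (2 : ℚ) • (mkA (X 0) ^ 2 + mkA (X 0) * mkA (X 1) + mkA (X 1) ^ 2) = 0 := by
    rw [two_smul]
    linear_combination h2 - (mkA (X 2) - mkA (X 0) - mkA (X 1)) * mkA_sum
  exact (smul_eq_zero.mp h).resolve_left two_ne_zero

lemma vGen_sum : vGen 0 + vGen 1 + vGen 2 = 0 := by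
  simp only [vGen, ← Submodule.Quotient.mk_add]
  rw [Submodule.Quotient.mk_eq_zero]
  refine Submodule.subset_span (Set.mem_singleton_iff.mpr ?_)
  funext i
  fin_cases i <;> simp

lemma eGen_sum (m : ℕ) (j : Fin m) : eGen m j 0 + eGen m j 1 + eGen m j 2 = 0 := by
  simp only [eGen, ← map_add, ← Pi.single_add, vGen_sum, Pi.single_zero, map_zero]

lemma eGen_anticomm (m : ℕ) (i j : Fin m) (k l : Fin 3) :
    eGen m i k * eGen m j l = -(eGen m j l * eGen m i k) :=
  eq_neg_of_add_eq_zero_left (ExteriorAlgebra.ι_add_mul_swap _ _)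

lemma tmul_eq_smul (m : ℕ) (r : Aq) (e : Em m) :
    (r ⊗ₜ[ℚ] e : Kk m) = r • ((1 : Aq) ⊗ₜ[ℚ] e) := by
  rw [TensorProduct.smul_tmul', smul_eq_mul, mul_one]

/-- In `K(3)` (indices shifted: the paper's `{1,2,3}` is `{0,1,2}` here):
`9·z(3,{1,2,3}) = z(2,{1,2})·z(2,{3}) − z(2,{1,3})·z(2,{2}) + z(2,{2,3})·z(2,{1})
+ z(1,{1,2})·z(3,{3}) − z(1,{1,3})·z(3,{2}) + z(1,{2,3})·z(3,{1})`. -/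
theorem nine_z3_identity :
    9 * zS 3 3 {0, 1, 2} =
      zS 3 2 {0, 1} * zS 3 2 {2} - zS 3 2 {0, 2} * zS 3 2 {1} + zS 3 2 {1, 2} * zS 3 2 {0} +
        zS 3 1 {0, 1} * zS 3 3 {2} - zS 3 1 {0, 2} * zS 3 3 {1} + zS 3 1 {1, 2} * zS 3 3 {0} := by
  have s1 (j : Fin 3) : ({j} : Finset (Fin 3)).sort (· ≤ ·) = [j] := by simp
  have s01 : ({0, 1} : Finset (Fin 3)).sort (· ≤ ·) = [0, 1] := by
    rw [Finset.sort_insert _ (by decide) (by decide), s1]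
  have s02 : ({0, 2} : Finset (Fin 3)).sort (· ≤ ·) = [0, 2] := by
    rw [Finset.sort_insert _ (by decide) (by decide), s1]
  have s12 : ({1, 2} : Finset (Fin 3)).sort (· ≤ ·) = [1, 2] := by
    rw [Finset.sort_insert _ (by decide) (by decide), s1]
  have s012 : ({0, 1, 2} : Finset (Fin 3)).sort (· ≤ ·) = [0, 1, 2] := by
    rw [Finset.sort_insert _ (by decide) (by decide), s12]
  let e (k j : Fin 3) : Kk 3 := (1 : Aq) ⊗ₜ[ℚ] eGen 3 j k
  have anti (k l i j : Fin 3) : e k j * e l i = -(e l i * e k j) := by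
    simp only [e, Algebra.TensorProduct.tmul_mul_tmul, ← TensorProduct.tmul_neg, mul_one]
    rw [eGen_anticomm]
  have key := nine_identity_of_anticomm (mkA (X 0)) (mkA (X 1)) (mkA (X 2))
    mkA_sum mkA_quadratic (e 0) (e 1) (e 2)
    (fun j => by simp only [e, ← TensorProduct.tmul_add, eGen_sum, TensorProduct.tmul_zero])
    (anti 0 0) (anti 1 0) (anti 1 1)
  simp only [e, Algebra.TensorProduct.tmul_mul_tmul, mul_one] at key
  simp only [zS, zz, prodGen, s1, s01, s02, s12, s012, List.map_cons, List.map_nil,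
    List.prod_cons, List.prod_nil, mul_one, Nat.reduceSub, pow_zero, pow_one, map_pow, map_one]
  simp only [tmul_eq_smul 3 (mkA _), tmul_eq_smul 3 (mkA _ ^ 2), ← mul_assoc]
  exact key

end
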